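/- arXiv:1810.12493 — 2 statements merged into one kernel-verified Lean document; each statement's English description precedes it below -/
import Mathlib

section
/- For all integers N ≥ 0 and ℓ, the number of strongly concave compositions of N + |ℓ|(|ℓ|+1)/2 with rank ℓ satisfies V_d(ℓ, N + |ℓ|(|ℓ|+1)/2) = Σ_{n≥0} χ(n) · p(N − 2n(n+1)/3 − n|ℓ|), where χ(n) = 1 if n ≡ 0 (mod 3), χ(n) = 0 if n ≡ 1 (mod 3), χ(n) = −1 if n ≡ 2 (mod 3) (so χ(n) is the Kronecker symbol (−3/(2n+1)), and 2n(n+1)/3 is an integer whenever χ(n) ≠ 0), and where p(k) denotes the number of integer partitions of k, with the convention p(k) = 0 for k < 0. The sum is finite since p vanishes on negative arguments. -/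
open scoped BigOperators

/-- `IsSCC n l k` says that the list `l = (a_1, ..., a_s)` of nonnegative integers
is a strongly concave composition of `n` with central part at (1-indexed) position `k`:
`a_1 > a_2 > ... > a_{k-1} > a_k < a_{k+1} < ... < a_s` and `a_1 + ... + a_s = n`. -/
def IsSCC (n : ℕ) (l : List ℕ) (k : ℕ) : Prop :=
  1 ≤ k ∧ k ≤ l.length ∧ l.sum = n ∧
  (∀ i j : Fin l.length, (i : ℕ) < j → (j : ℕ) < k → l.get j < l.get i) ∧
  (∀ i j : Fin l.length, k - 1 ≤ (i : ℕ) → (i : ℕ) < j → l.get i < l.get j)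

/-- The rank `s - 2k + 1` of a strongly concave composition with `s` parts and
central part at position `k`. -/
def sccRank (l : List ℕ) (k : ℕ) : ℤ := (l.length : ℤ) - 2 * k + 1

/-- `Vd m n` is the number of strongly concave compositions of `n` with rank `m`. -/
noncomputable def Vd (m : ℤ) (n : ℕ) : ℕ :=
  Set.ncard {p : List ℕ × ℕ | IsSCC n p.1 p.2 ∧ sccRank p.1 p.2 = m}

/-- `VdTotal n` is the total number of strongly concave compositions of `n`. -/
noncomputable def VdTotal (n : ℕ) : ℕ :=
  Set.ncard {p : List ℕ × ℕ | IsSCC n p.1 p.2}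

/-- The partition function, extended by `0` to negative integers. -/
def partitionCount (k : ℤ) : ℕ :=
  if 0 ≤ k then Fintype.card (Nat.Partition k.toNat) else 0

/-- The Kronecker symbol `(-3 / (2n+1))` as a function of `n`. -/
def chi (n : ℕ) : ℤ :=
  if n % 3 = 0 then 1 else if n % 3 = 1 then 0 else -1


open PowerSeries in
/-- generating function of a weighted set -/
noncomputable def GF {α : Type*} (S : Set α) (w : α → ℕ) : PowerSeries ℤ :=
  PowerSeries.mk fun n => ((S ∩ {a | w a = n}).ncard : ℤ)

open PowerSeries in
lemma gf_coeff_shift {α : Type*} (S : Set α) (w : α → ℕ) (i n : ℕ) :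
    coeff n ((X : PowerSeries ℤ) ^ i * GF S w) = ((S ∩ {a | w a + i = n}).ncard : ℤ) := by
  rw [coeff_X_pow_mul']
  split_ifs with h
  · simp only [GF, coeff_mk]
    congr 3
    ext a
    simp only [Set.mem_ofPred_eq]
    omega
  · have : S ∩ {a | w a + i = n} = ∅ := by
      ext a
      simp only [Set.mem_inter_iff, Set.mem_ofPred_eq, Set.mem_empty_iff_false, iff_false, not_and]
      intro _
      omega
    rw [this]; simp

open PowerSeries in
lemma gf_split {α β γ : Type*} (S : Set α) (T : Set β) (U : Set γ) (w : α → ℕ)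
    (wT : β → ℕ) (wU : γ → ℕ) (f : β → α) (g : γ → α) (i j : ℕ)
    (hf : Function.Injective f) (hg : Function.Injective g)
    (hS : ∀ a, a ∈ S ↔ (∃ b ∈ T, f b = a) ∨ (∃ c ∈ U, g c = a))
    (hd : ∀ b ∈ T, ∀ c ∈ U, f b ≠ g c)
    (hwf : ∀ b ∈ T, w (f b) = wT b + i) (hwg : ∀ c ∈ U, w (g c) = wU c + j)
    (hfin : ∀ n, (S ∩ {a | w a = n}).Finite) :
    GF S w = X ^ i * GF T wT + X ^ j * GF U wU := by
  ext n
  rw [map_add, gf_coeff_shift, gf_coeff_shift]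
  simp only [GF, coeff_mk]
  have e : S ∩ {a | w a = n} =
      f '' (T ∩ {b | wT b + i = n}) ∪ g '' (U ∩ {c | wU c + j = n}) := by
    ext a
    simp only [Set.mem_inter_iff, Set.mem_ofPred_eq, Set.mem_union, Set.mem_image, hS]
    constructor
    · rintro ⟨⟨b, hb, rfl⟩ | ⟨b, hb, rfl⟩, h⟩
      · left; exact ⟨b, ⟨hb, by rw [← hwf b hb, h]⟩, rfl⟩
      · right; exact ⟨b, ⟨hb, by rw [← hwg b hb, h]⟩, rfl⟩
    · rintro (⟨b, ⟨hb, h⟩, rfl⟩ | ⟨b, ⟨hb, h⟩, rfl⟩)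
      · exact ⟨Or.inl ⟨b, hb, rfl⟩, by rw [hwf b hb, h]⟩
      · exact ⟨Or.inr ⟨b, hb, rfl⟩, by rw [hwg b hb, h]⟩
  have hF := hfin n
  rw [e] at hF ⊢
  rw [Set.ncard_union_eq _ (hF.subset Set.subset_union_left) (hF.subset Set.subset_union_right),
    Set.ncard_image_of_injective _ hf, Set.ncard_image_of_injective _ hg]
  · push_cast; rfl
  · rw [Set.disjoint_left]
    rintro a ⟨b, hb, rfl⟩ ⟨c, hc, h⟩
    exact hd b hb.1 c hc.1 h.symm

def sh (A : Finset ℕ) : Finset ℕ := A.map ⟨Nat.succ, Nat.succ_injective⟩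
def tt (A : Finset ℕ) : Finset ℕ := insert 0 (sh A)

lemma zero_notMem_sh (A : Finset ℕ) : 0 ∉ sh A := by simp [sh]
lemma sh_inj : Function.Injective sh := Finset.map_injective _
lemma tt_inj : Function.Injective tt := by
  intro A B h
  apply sh_inj
  have := congrArg (fun s => s.erase 0) h
  simpa [tt, Finset.erase_insert (zero_notMem_sh _)] using this
lemma sh_ne_tt (A B : Finset ℕ) : sh A ≠ tt B := by
  intro h
  apply zero_notMem_sh A
  rw [h]; simp [tt]
lemma card_sh (A : Finset ℕ) : (sh A).card = A.card := by simp [sh]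
lemma card_tt (A : Finset ℕ) : (tt A).card = A.card + 1 := by
  rw [tt, Finset.card_insert_of_notMem (zero_notMem_sh A), card_sh]
lemma sum_sh (A : Finset ℕ) : (sh A).sum id = A.sum id + A.card := by
  simp [sh, Finset.sum_add_distrib]
lemma sum_tt (A : Finset ℕ) : (tt A).sum id = A.sum id + A.card := by
  rw [tt, Finset.sum_insert (zero_notMem_sh A), sum_sh]; simp
lemma sh_or_tt (A : Finset ℕ) : (∃ B, sh B = A) ∨ (∃ B, tt B = A) := by
  have key : ∀ A : Finset ℕ, 0 ∉ A → ∃ B, sh B = A := by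
    intro A h
    refine ⟨A.image Nat.pred, ?_⟩
    ext x
    simp only [sh, Finset.mem_map, Finset.mem_image, Function.Embedding.coeFn_mk]
    constructor
    · rintro ⟨y, ⟨z, hz, rfl⟩, rfl⟩
      rcases z with _ | z
      · exact absurd hz h
      · simpa using hz
    · intro hx
      rcases x with _ | x
      · exact absurd hx h
      · exact ⟨x, ⟨x + 1, hx, rfl⟩, rfl⟩
  by_cases h : 0 ∈ A
  · right
    obtain ⟨B, hB⟩ := key (A.erase 0) (by simp)
    exact ⟨B, by rw [tt, hB, Finset.insert_erase h]⟩
  · left; exact key A h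

lemma mem_le_sum (A : Finset ℕ) {x : ℕ} (h : x ∈ A) : x ≤ A.sum id :=
  Finset.single_le_sum (f := id) (fun _ _ => Nat.zero_le _) h

lemma subset_of_sum (A : Finset ℕ) {n : ℕ} (h : A.sum id ≤ n) : A ⊆ Finset.range (n + 1) := by
  intro x hx
  have := mem_le_sum A hx
  simp; omega

lemma finite_sum_le (n : ℕ) : {A : Finset ℕ | A.sum id ≤ n}.Finite :=
  (Finset.finite_toSet (Finset.range (n + 1)).powerset).subset fun A h => by
    simpa only [Finset.mem_coe, Finset.mem_powerset] using subset_of_sum A h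

def FS (m : ℕ) : Set (Finset ℕ × Finset ℕ) := {p | p.1.card = p.2.card + m}
def fw (e : ℕ) (p : Finset ℕ × Finset ℕ) : ℕ := p.1.sum id + p.2.sum id + e * p.2.card

noncomputable def FF (e m : ℕ) : PowerSeries ℤ := GF (FS m) (fw e)

lemma fw_fin (e m n : ℕ) : (FS m ∩ {a | fw e a = n}).Finite := by
  refine ((finite_sum_le n).prod (finite_sum_le n)).subset ?_
  rintro ⟨A, B⟩ ⟨-, h⟩
  simp only [fw, Set.mem_ofPred_eq] at h
  simp only [Set.mem_prod, Set.mem_ofPred_eq]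
  generalize e * B.card = z at h
  omega

open PowerSeries in
lemma FF_alpha (e m : ℕ) :
    FF e (m + 1) = X ^ (m + 1) * FF (e + 1) (m + 1) + X ^ m * FF (e + 1) m := by
  refine gf_split _ _ _ _ _ _ (fun p => (sh p.1, p.2)) (fun p => (tt p.1, p.2)) _ _
    ?_ ?_ ?_ ?_ ?_ ?_ (fw_fin e (m + 1))
  · rintro ⟨a, b⟩ ⟨c, d⟩ h
    simp only [Prod.mk.injEq] at h ⊢
    exact ⟨sh_inj h.1, h.2⟩
  · rintro ⟨a, b⟩ ⟨c, d⟩ h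
    simp only [Prod.mk.injEq] at h ⊢
    exact ⟨tt_inj h.1, h.2⟩
  · rintro ⟨A, B⟩
    simp only [FS, Set.mem_ofPred_eq, Prod.exists, Prod.mk.injEq]
    constructor
    · intro h
      rcases sh_or_tt A with ⟨A', rfl⟩ | ⟨A', rfl⟩
      · left; rw [card_sh] at h; exact ⟨A', B, h, rfl, rfl⟩
      · right; rw [card_tt] at h; exact ⟨A', B, by omega, rfl, rfl⟩
    · rintro (⟨A', B', h, rfl, rfl⟩ | ⟨A', B', h, rfl, rfl⟩)
      · rw [card_sh]; exact h
      · rw [card_tt]; omega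
  · rintro ⟨a, b⟩ - ⟨c, d⟩ - h
    simp only [Prod.mk.injEq] at h
    exact sh_ne_tt _ _ h.1
  · rintro ⟨A, B⟩ h
    simp only [FS, Set.mem_ofPred_eq] at h
    simp only [fw, sum_sh, h]; ring
  · rintro ⟨A, B⟩ h
    simp only [FS, Set.mem_ofPred_eq] at h
    simp only [fw, sum_tt, h]; ring

open PowerSeries in
lemma FF_beta (e m : ℕ) :
    FF e m = FF (e + 1) m + X ^ e * FF (e + 1) (m + 1) := by
  have := gf_split (FS m) (FS m) (FS (m + 1)) (fw e) (fw (e + 1)) (fw (e + 1))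
    (fun p => (p.1, sh p.2)) (fun p => (p.1, tt p.2)) 0 e
    ?_ ?_ ?_ ?_ ?_ ?_ (fw_fin e m)
  · simpa [FF] using this
  · rintro ⟨a, b⟩ ⟨c, d⟩ h
    simp only [Prod.mk.injEq] at h ⊢
    exact ⟨h.1, sh_inj h.2⟩
  · rintro ⟨a, b⟩ ⟨c, d⟩ h
    simp only [Prod.mk.injEq] at h ⊢
    exact ⟨h.1, tt_inj h.2⟩
  · rintro ⟨A, B⟩
    simp only [FS, Set.mem_ofPred_eq, Prod.exists, Prod.mk.injEq]
    constructor
    · intro h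
      rcases sh_or_tt B with ⟨A', rfl⟩ | ⟨A', rfl⟩
      · left; rw [card_sh] at h; exact ⟨A, A', h, rfl, rfl⟩
      · right; rw [card_tt] at h; exact ⟨A, A', by omega, rfl, rfl⟩
    · rintro (⟨A', B', h, rfl, rfl⟩ | ⟨A', B', h, rfl, rfl⟩)
      · rw [card_sh]; exact h
      · rw [card_tt]; omega
  · rintro ⟨a, b⟩ - ⟨c, d⟩ - h
    simp only [Prod.mk.injEq] at h
    exact sh_ne_tt _ _ h.2
  · rintro ⟨A, B⟩ h
    simp only [fw, sum_sh, card_sh]; ring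
  · rintro ⟨A, B⟩ h
    simp only [fw, sum_tt, card_tt]; ring

def tri (m : ℕ) : ℕ := ∑ i ∈ Finset.range m, i
lemma tri_succ (m : ℕ) : tri (m + 1) = tri m + m := Finset.sum_range_succ _ _
lemma tri_zero : tri 0 = 0 := rfl
lemma tri_eq (m : ℕ) : m * (m + 1) / 2 = tri (m + 1) := by
  rw [tri, Finset.sum_range_id, Nat.add_sub_cancel, mul_comm]

open PowerSeries in
lemma FF_one (m : ℕ) : FF 1 m = X ^ tri m * FF 1 0 := by
  induction m with
  | zero => simp [tri_zero]
  | succ m ih =>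
    have h1 := FF_alpha 1 m
    have h2 := FF_beta 1 m
    have : FF 1 (m + 1) = X ^ m * FF 1 m := by
      rw [h1, h2]; ring
    rw [this, ih, tri_succ]; ring

lemma tri_card_le (A : Finset ℕ) : tri A.card ≤ A.sum id := by
  induction A using Finset.induction_on_max with
  | empty => simp [tri_zero]
  | insert a s h ih =>
    have hn : a ∉ s := fun h' => lt_irrefl _ (h a h')
    rw [Finset.card_insert_of_notMem hn, Finset.sum_insert hn, tri_succ]
    have : s ⊆ Finset.range a := fun x hx => by simpa using h x hx
    have := Finset.card_le_card this
    simp at this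
    simp only [id]
    simp only [id] at ih
    omega

lemma tri_add (m r : ℕ) : tri m + r * m ≤ tri (r + m) := by
  induction r with
  | zero => simp
  | succ r ih =>
    rw [show r + 1 + m = (r + m) + 1 by ring, tri_succ]
    nlinarith

def GS (m : ℕ) : Set (Finset ℕ) := {p | p.card = m}
noncomputable def GG (m : ℕ) : PowerSeries ℤ := GF (GS m) (fun A => A.sum id)

open PowerSeries in
lemma GG_succ (m : ℕ) : GG (m + 1) = X ^ (m + 1) * GG (m + 1) + X ^ m * GG m := by
  refine gf_split _ _ _ _ _ _ sh tt _ _ sh_inj tt_inj ?_ (fun b _ c _ => sh_ne_tt b c) ?_ ?_ ?_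
  · intro A
    simp only [GS, Set.mem_ofPred_eq]
    constructor
    · intro h
      rcases sh_or_tt A with ⟨A', rfl⟩ | ⟨A', rfl⟩
      · left; rw [card_sh] at h; exact ⟨A', h, rfl⟩
      · right; rw [card_tt] at h; exact ⟨A', by omega, rfl⟩
    · rintro (⟨A', h, rfl⟩ | ⟨A', h, rfl⟩)
      · rw [card_sh]; exact h
      · rw [card_tt]; omega
  · intro A h
    simp only [GS, Set.mem_ofPred_eq] at h
    simp only [sum_sh, h]
  · intro A h
    simp only [GS, Set.mem_ofPred_eq] at h
    simp only [sum_tt, h]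
  · intro n
    exact (finite_sum_le n).subset fun A h => h.2.le

def QS (m : ℕ) : Set (Multiset ℕ) := {s | ∀ x ∈ s, 1 ≤ x ∧ x ≤ m}
noncomputable def QQ (m : ℕ) : PowerSeries ℤ := GF (QS m) Multiset.sum

lemma card_le_sum_of_pos (s : Multiset ℕ) (h : ∀ x ∈ s, 1 ≤ x) : s.card ≤ s.sum := by
  simpa using Multiset.card_nsmul_le_sum h

lemma QS_fin (m n : ℕ) : (QS m ∩ {s | s.sum = n}).Finite := by
  have : (QS m ∩ {s | s.sum = n}) ⊆ Set.range (fun p : Nat.Partition n => p.parts) := by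
    rintro s ⟨h, h'⟩
    exact ⟨⟨s, fun {i} hi => (h i hi).1, h'⟩, rfl⟩
  exact (Set.finite_range _).subset this

open PowerSeries in
lemma QQ_succ (m : ℕ) : QQ (m + 1) = X ^ (m + 1) * QQ (m + 1) + QQ m := by
  have key : GF (QS (m + 1)) Multiset.sum = X ^ (m + 1) * GF (QS (m + 1)) Multiset.sum
      + X ^ 0 * GF {s : {s : Multiset ℕ // m + 1 ∉ s} | s.1 ∈ QS m} (fun s => s.1.sum) := by
    refine gf_split _ _ _ _ _ _ (fun s => (m + 1) ::ₘ s) (fun s => s.1) _ _ ?_ ?_ ?_ ?_ ?_ ?_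
      (QS_fin (m + 1))
    · intro a b h; simpa using h
    · exact Subtype.val_injective
    · intro s
      constructor
      · intro h
        by_cases hm : m + 1 ∈ s
        · left
          refine ⟨s.erase (m + 1), fun x hx => h x (Multiset.mem_of_mem_erase hx),
            Multiset.cons_erase hm⟩
        · right
          refine ⟨⟨s, hm⟩, fun x hx => ?_, rfl⟩
          have := h x hx
          have : x ≠ m + 1 := fun h => hm (h ▸ hx)
          simp only at *
          omega
      · rintro (⟨b, hb, rfl⟩ | ⟨⟨c, hc'⟩, hc, rfl⟩)
        · intro x hx
          rcases Multiset.mem_cons.1 hx with rfl | hx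
          · omega
          · exact hb x hx
        · intro x hx
          have := hc x hx
          omega
    · rintro b - ⟨c, hc⟩ - h
      apply hc
      simp only at h
      rw [← h]; simp
    · intro b _; simp [add_comm]
    · intro c _; simp
  have k2 : GF {s : {s : Multiset ℕ // m + 1 ∉ s} | s.1 ∈ QS m} (fun s => s.1.sum) = QQ m := by
    ext n
    simp only [QQ, GF, coeff_mk]
    rw [← Set.ncard_image_of_injective _ Subtype.val_injective]
    congr 2
    ext s
    simp only [Set.mem_image, Set.mem_inter_iff, Set.mem_ofPred_eq, Subtype.exists]
    constructor
    · rintro ⟨a, ha, h, rfl⟩; exact h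
    · intro h
      exact ⟨s, fun h' => by have := h.1 _ h'; omega, h, rfl⟩
  rw [k2, pow_zero, one_mul] at key
  exact key

open PowerSeries in
lemma GG_eq (m : ℕ) : GG m = X ^ tri m * QQ m := by
  induction m with
  | zero =>
    simp only [tri_zero, pow_zero, one_mul]
    ext n
    simp only [QQ, GG, GF, coeff_mk]
    have e1 : GS 0 = {∅} := by ext; simp [GS]
    have e2 : QS 0 = {0} := by
      ext s
      simp only [QS, Set.mem_ofPred_eq, Set.mem_singleton_iff]
      constructor
      · intro h
        apply Multiset.eq_zero_of_forall_notMem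
        intro x hx
        have := h x hx
        omega
      · rintro rfl; simp
    rw [e1, e2]
    by_cases h : n = 0
    · subst h
      rw [Set.inter_eq_left.2 (by simp), Set.inter_eq_left.2 (by simp)]; simp
    · rw [Set.singleton_inter_eq_empty.2 (by simpa using fun h' => h h'.symm),
        Set.singleton_inter_eq_empty.2 (by simpa using fun h' => h h'.symm)]; simp
  | succ m ih =>
    have h1 := GG_succ m
    have h2 := QQ_succ m
    have hne : (1 - X ^ (m + 1) : PowerSeries ℤ) ≠ 0 := by
      intro h
      have := congrArg (coeff 0) h
      simp at this
    apply mul_left_cancel₀ hne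
    rw [tri_succ]
    have h1' : (1 - X ^ (m + 1)) * GG (m + 1) = X ^ m * GG m := by linear_combination h1
    have h2' : (1 - X ^ (m + 1)) * QQ (m + 1) = QQ m := by linear_combination h2
    rw [h1', ih, ← h2']; ring

open PowerSeries in
lemma coeff_P (N : ℕ) : coeff N (FF 1 0) = (Fintype.card (Nat.Partition N) : ℤ) := by
  set m := N + 1 with hm
  have h1 : coeff N (FF 1 0) = coeff (N + tri m) (FF 1 m) := by
    rw [FF_one m, coeff_X_pow_mul]
  have h2 : coeff (N + tri m) (FF 1 m) = coeff (N + tri m) (GG m) := by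
    simp only [FF, GG, GF, coeff_mk]
    rw [← Set.ncard_image_of_injective (f := fun A : Finset ℕ => (A, (∅ : Finset ℕ)))
      _ (fun a b h => by simpa using h)]
    congr 2
    ext ⟨A, B⟩
    simp only [FS, GS, fw, Set.mem_inter_iff, Set.mem_ofPred_eq, Set.mem_image, Prod.mk.injEq]
    constructor
    · rintro ⟨hc, hs⟩
      have hB : B.card = 0 := by
        by_contra hB
        have t1 := tri_card_le A
        rw [hc] at t1
        have t2 := tri_add m B.card
        have : m ≤ B.card * m := Nat.le_mul_of_pos_left _ (by omega)
        omega
      rw [Finset.card_eq_zero] at hB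
      subst hB
      simp at hc hs
      exact ⟨A, ⟨hc, by simpa using hs⟩, rfl, rfl⟩
    · rintro ⟨A', ⟨h, h'⟩, rfl, rfl⟩
      exact ⟨by simpa using h, by simpa using h'⟩
  rw [h1, h2, GG_eq, coeff_X_pow_mul]
  simp only [QQ, GF, coeff_mk]
  have : (QS m ∩ {s | s.sum = N}) = (fun p : Nat.Partition N => p.parts) '' Set.univ := by
    ext s
    simp only [Set.image_univ, Set.mem_range]
    constructor
    · rintro ⟨h, h'⟩
      exact ⟨⟨s, fun {i} hi => (h i hi).1, h'⟩, rfl⟩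
    · rintro ⟨p, rfl⟩
      refine ⟨fun x hx => ⟨p.parts_pos hx, ?_⟩, p.parts_sum⟩
      have := Nat.Partition.le_of_mem_parts hx
      omega
  rw [this, Set.ncard_image_of_injective _ (fun a b h => Nat.Partition.ext h), Set.ncard_univ,
    Nat.card_eq_fintype_card]

open PowerSeries in
noncomputable def VV (C l : ℕ) : PowerSeries ℤ :=
  ∑ c ∈ Finset.range C, X ^ (c + (c + 1) * l) * FF (2 * c + 2) l
open PowerSeries in
noncomputable def WW (C l : ℕ) : PowerSeries ℤ :=
  ∑ c ∈ Finset.range C, X ^ (c * (l + 1)) * FF (2 * c + 3) l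

open PowerSeries in
lemma rel1 (C l : ℕ) :
    X ^ (l + 1) * (FF 1 (l + 1) - X ^ (C * (l + 1)) * FF (2 * C + 1) (l + 1)) =
      X ^ (2 * l + 1) * WW C l + VV C (l + 2) := by
  induction C with
  | zero => simp [VV, WW]
  | succ C ih =>
    have e1 : WW (C + 1) l = WW C l + X ^ (C * (l + 1)) * FF (2 * C + 3) l :=
      Finset.sum_range_succ _ _
    have e2 : VV (C + 1) (l + 2) = VV C (l + 2) +
        X ^ (C + (C + 1) * (l + 2)) * FF (2 * C + 2) (l + 2) := Finset.sum_range_succ _ _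
    have b := FF_beta (2 * C + 1) (l + 1)
    have a := FF_alpha (2 * C + 2) l
    rw [e1, e2, show 2 * (C + 1) + 1 = 2 * C + 3 by ring]
    simp only [show 2 * C + 1 + 1 = 2 * C + 2 by ring, show l + 1 + 1 = l + 2 by ring,
      show 2 * C + 2 + 1 = 2 * C + 3 by ring] at a b
    rw [a] at b
    linear_combination ih + X ^ (l + 1) * X ^ (C * (l + 1)) * b

open PowerSeries in
lemma rel2 (C l : ℕ) :
    FF 1 (l + 1) - X ^ (C * (l + 1)) * FF (2 * C + 1) (l + 1) =
      X ^ (l + 3) * WW C (l + 2) + VV C l := by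
  induction C with
  | zero => simp [VV, WW]
  | succ C ih =>
    have e1 : WW (C + 1) (l + 2) = WW C (l + 2) + X ^ (C * (l + 2 + 1)) * FF (2 * C + 3) (l + 2) :=
      Finset.sum_range_succ _ _
    have e2 : VV (C + 1) l = VV C l +
        X ^ (C + (C + 1) * l) * FF (2 * C + 2) l := Finset.sum_range_succ _ _
    have a := FF_alpha (2 * C + 1) l
    have b := FF_beta (2 * C + 2) (l + 1)
    rw [e1, e2, show 2 * (C + 1) + 1 = 2 * C + 3 by ring]
    simp only [show 2 * C + 1 + 1 = 2 * C + 2 by ring, show l + 1 + 1 = l + 2 by ring,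
      show 2 * C + 2 + 1 = 2 * C + 3 by ring] at a b
    rw [b] at a
    linear_combination ih + X ^ (C * (l + 1)) * a

open PowerSeries in
lemma rel3 (C l : ℕ) : ∃ E : PowerSeries ℤ,
    X ^ (l + 2) * VV C l = X ^ (l + 2 + tri (l + 1)) * FF 1 0
      - X ^ (l + 3 + tri (l + 3)) * FF 1 0 + VV C (l + 4) + X ^ C * E := by
  have h1 := rel1 C (l + 2)
  have h2 := rel2 C l
  rw [FF_one (l + 1)] at h2
  rw [FF_one (l + 2 + 1)] at h1
  refine ⟨- X ^ (l + 2) * X ^ (C * l) * FF (2 * C + 1) (l + 1)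
    + X ^ (l + 3) * X ^ (C * (l + 2)) * FF (2 * C + 1) (l + 3), ?_⟩
  simp only [show l + 2 + 1 = l + 3 by ring, show l + 2 + 2 = l + 4 by ring] at h1 h2
  linear_combination (- X ^ (l + 2)) * h2 + h1

def TS (l : ℕ) : Set (ℕ × (Finset ℕ × Finset ℕ)) := {t | t.2 ∈ FS l}
def tw (l : ℕ) (t : ℕ × (Finset ℕ × Finset ℕ)) : ℕ :=
  t.1 + (t.1 + 1) * l + fw (2 * t.1 + 2) t.2

lemma tw_fin (l n : ℕ) : (TS l ∩ {a | tw l a = n}).Finite := by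
  refine ((Set.finite_Iic n).prod ((finite_sum_le n).prod (finite_sum_le n))).subset ?_
  rintro ⟨c, A, B⟩ ⟨-, h⟩
  simp only [tw, fw, Set.mem_ofPred_eq] at h
  simp only [Set.mem_prod, Set.mem_ofPred_eq, Set.mem_Iic]
  generalize (2 * c + 2) * B.card = z at h
  generalize (c + 1) * l = z' at h
  omega

lemma VV_eq (C l : ℕ) : VV C l = GF (TS l ∩ {t | t.1 < C}) (tw l) := by
  induction C with
  | zero =>
    have : TS l ∩ {t | t.1 < 0} = ∅ := by
      ext; simp
    rw [this]
    ext n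
    simp [VV, GF]
  | succ C ih =>
    have e2 : VV (C + 1) l = VV C l +
        PowerSeries.X ^ (C + (C + 1) * l) * FF (2 * C + 2) l := Finset.sum_range_succ _ _
    rw [e2, ih, FF]
    have := gf_split (TS l ∩ {t | t.1 < C + 1}) (TS l ∩ {t | t.1 < C}) (FS l) (tw l) (tw l)
      (fw (2 * C + 2)) (fun t => t) (fun p => (C, p)) 0 (C + (C + 1) * l) ?_ ?_ ?_ ?_ ?_ ?_ ?_
    · rw [this]; simp
    · exact fun _ _ h => h
    · intro a b h; simpa using h
    · rintro ⟨c, p⟩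
      simp only [TS, Set.mem_inter_iff, Set.mem_ofPred_eq, exists_eq_right, Prod.mk.injEq]
      constructor
      · rintro ⟨h, h'⟩
        rcases Nat.lt_succ_iff_lt_or_eq.1 h' with h' | rfl
        · exact Or.inl ⟨h, h'⟩
        · exact Or.inr ⟨p, h, rfl, rfl⟩
      · rintro (⟨h, h'⟩ | ⟨q, h, rfl, rfl⟩)
        · exact ⟨h, by omega⟩
        · exact ⟨h, by omega⟩
    · rintro ⟨c, p⟩ hb q _ h
      simp only [Prod.mk.injEq] at h
      have := hb.2
      simp only [Set.mem_ofPred_eq] at this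
      omega
    · intro b _; rfl
    · intro p _
      simp only [tw]; ring
    · intro n
      exact (tw_fin l n).subset fun t h => ⟨h.1.1, h.2⟩

noncomputable def vcnt (l n : ℕ) : ℕ := (TS l ∩ {a | tw l a = n}).ncard

lemma coeff_VV (C l n : ℕ) (h : n < C) : PowerSeries.coeff n (VV C l) = (vcnt l n : ℤ) := by
  rw [VV_eq, vcnt, GF, PowerSeries.coeff_mk]
  congr 2
  ext t
  simp only [Set.mem_inter_iff, Set.mem_ofPred_eq]
  constructor
  · rintro ⟨⟨a, b⟩, c⟩; exact ⟨a, c⟩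
  · rintro ⟨a, c⟩
    refine ⟨⟨a, ?_⟩, c⟩
    simp only [tw] at c
    generalize (t.1 + 1) * l = z' at c
    omega

lemma vcnt_zero (l n : ℕ) (h : n < tri (l + 1)) : vcnt l n = 0 := by
  rw [vcnt]
  have : TS l ∩ {a | tw l a = n} = ∅ := by
    ext ⟨c, A, B⟩
    simp only [TS, FS, tw, fw, Set.mem_inter_iff, Set.mem_ofPred_eq, Set.mem_empty_iff_false,
      iff_false, not_and]
    intro hc hs
    have t1 := tri_card_le A
    rw [hc] at t1
    have t2 := tri_add l B.card
    rw [tri_succ] at h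
    have : l ≤ (c + 1) * l := Nat.le_mul_of_pos_left _ (by omega)
    omega
  rw [this]; simp

open PowerSeries in
lemma vcnt_rec (l N : ℕ) :
    (vcnt l (N + tri (l + 1)) : ℤ) = partitionCount (N : ℤ)
      - partitionCount ((N : ℤ) - (2 * l + 4)) +
      (if 3 * l + 8 ≤ N then (vcnt (l + 4) ((N - (3 * l + 8)) + tri (l + 5)) : ℤ) else 0) := by
  set n := N + tri (l + 1) + (l + 2) with hn
  obtain ⟨E, hE⟩ := rel3 (n + 1) l
  have h := congrArg (coeff n) hE
  have t2 : tri (l + 2) = tri (l + 1) + (l + 1) := tri_succ _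
  have t3 : tri (l + 3) = tri (l + 2) + (l + 2) := tri_succ _
  have t4 : tri (l + 4) = tri (l + 3) + (l + 3) := tri_succ _
  have t5 : tri (l + 5) = tri (l + 4) + (l + 4) := tri_succ _
  rw [map_add, map_add, map_sub, coeff_VV _ _ _ (Nat.lt_succ_self n)] at h
  rw [coeff_X_pow_mul' E] at h
  rw [if_neg (by omega)] at h
  have a1 : coeff n (X ^ (l + 2) * VV (n + 1) l) = (vcnt l (N + tri (l + 1)) : ℤ) := by
    rw [hn, coeff_X_pow_mul, coeff_VV]
    omega
  have a2 : coeff n (X ^ (l + 2 + tri (l + 1)) * FF 1 0) = (partitionCount (N : ℤ) : ℤ) := by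
    rw [show n = N + (l + 2 + tri (l + 1)) by omega, coeff_X_pow_mul, coeff_P]
    simp [partitionCount]
  have a3 : coeff n (X ^ (l + 3 + tri (l + 3)) * FF 1 0) =
      (partitionCount ((N : ℤ) - (2 * l + 4)) : ℤ) := by
    rw [coeff_X_pow_mul']
    by_cases h' : 2 * l + 4 ≤ N
    · rw [if_pos (by omega), coeff_P, partitionCount, if_pos (by omega)]
      rw [show n - (l + 3 + tri (l + 3)) = ((N : ℤ) - (2 * l + 4)).toNat by omega]
    · rw [if_neg (by omega), partitionCount, if_neg (by omega)]; simp
  rw [a1, a2, a3] at h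
  rw [h, add_zero]
  congr 1
  split_ifs with h'
  · congr 2; omega
  · rw [vcnt_zero _ _ (by rw [show l + 4 + 1 = l + 5 by ring]; omega)]; simp

noncomputable def term (N : ℤ) (l n : ℕ) : ℤ :=
  chi n * partitionCount (N - 2 * n * (n + 1) / 3 - n * l)

lemma term_zero (N : ℤ) (l n : ℕ) (h : N < n) : term N l n = 0 := by
  have h1 : (n : ℤ) ≤ 2 * n * (n + 1) / 3 := by
    rw [Int.le_ediv_iff_mul_le (by norm_num)]
    rcases n with _ | n
    · simp
    · push_cast; nlinarith
  have h2 : (0 : ℤ) ≤ n * l := by positivity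
  rw [term, partitionCount, if_neg (by omega)]; simp

lemma term_summable (N : ℤ) (l : ℕ) : Summable (term N l) := by
  apply summable_of_ne_finset_zero (s := Finset.range (N.toNat + 1))
  intro n hn
  apply term_zero
  simp at hn
  omega

lemma term_shift (N : ℤ) (l n : ℕ) : term N l (n + 3) = term (N - (3 * l + 8)) (l + 4) n := by
  rw [term, term]
  have : chi (n + 3) = chi n := by simp [chi]
  rw [this]
  have e : (2 * ((n + 3 : ℕ) : ℤ) * ((n + 3 : ℕ) + 1)) / 3 = 2 * n * (n + 1) / 3 + (4 * n + 8) := by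
    rw [← Int.add_mul_ediv_right _ _ (by norm_num)]
    congr 1
    push_cast; ring
  rw [e]
  congr 3
  push_cast; ring

lemma RR_rec (N : ℤ) (l : ℕ) : ∑' n, term N l n = partitionCount N
      - partitionCount (N - (2 * l + 4)) + ∑' n, term (N - (3 * l + 8)) (l + 4) n := by
  rw [← (term_summable N l).sum_add_tsum_nat_add 3]
  congr 1
  · simp only [Finset.sum_range_succ, Finset.sum_range_zero]
    simp [term, chi]
    rw [sub_eq_add_neg]
    congr 4
    ring
  · exact tsum_congr fun n => term_shift N l n

lemma RR_neg (N : ℤ) (l : ℕ) (h : N < 0) : ∑' n, term N l n = 0 := by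
  rw [← tsum_zero]
  exact tsum_congr fun n => term_zero N l n (by omega)

lemma vcnt_eq (N : ℕ) : ∀ l : ℕ, (vcnt l (N + tri (l + 1)) : ℤ) = ∑' n, term N l n := by
  induction N using Nat.strong_induction_on with
  | _ N ih =>
    intro l
    rw [vcnt_rec, RR_rec]
    congr 1
    split_ifs with h
    · rw [ih _ (by omega) (l + 4)]
      congr 2
      push_cast [h]; ring
    · rw [RR_neg]; omega

lemma scc_cond1 (l : List ℕ) (k : ℕ) :
    (∀ i j : Fin l.length, (i : ℕ) < j → (j : ℕ) < k → l.get j < l.get i) ↔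
      (l.take k).Pairwise (· > ·) := by
  rw [List.pairwise_iff_getElem]
  constructor
  · intro h i j hi hj hij
    simp only [List.length_take] at hi hj
    have := h ⟨i, by omega⟩ ⟨j, by omega⟩ hij (by simp only; omega)
    simpa using this
  · intro h i j hij hj
    have := h i j (by simp; omega) (by simp; omega) hij
    simpa using this

lemma scc_cond2 (l : List ℕ) (k : ℕ) :
    (∀ i j : Fin l.length, k ≤ (i : ℕ) → (i : ℕ) < j → l.get i < l.get j) ↔
      (l.drop k).Pairwise (· < ·) := by
  rw [List.pairwise_iff_getElem]
  constructor
  · intro h i j hi hj hij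
    simp only [List.length_drop] at hi hj
    have := h ⟨k + i, by omega⟩ ⟨k + j, by omega⟩ (by simp) (by simp only; omega)
    simpa using this
  · intro h i j hij hj
    have := h (i - k) (j - k) (by simp; omega) (by simp; omega) (by omega)
    simp only [List.getElem_drop] at this
    simpa [Nat.add_sub_cancel' hij, Nat.add_sub_cancel' (hij.trans hj.le)] using this

lemma scc_iff (n : ℕ) (l : List ℕ) (k : ℕ) : IsSCC n l k ↔
    ∃ (L : List ℕ) (c : ℕ) (R : List ℕ), l = L ++ c :: R ∧ k = L.length + 1 ∧ l.sum = n ∧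
      (L ++ [c]).Pairwise (· > ·) ∧ (c :: R).Pairwise (· < ·) := by
  rw [IsSCC, scc_cond1, scc_cond2]
  constructor
  · rintro ⟨h1, h2, h3, h4, h5⟩
    obtain ⟨k, rfl⟩ : ∃ k', k = k' + 1 := ⟨k - 1, by omega⟩
    have hk : k < l.length := by omega
    have hd : l.drop k = l[k] :: l.drop (k + 1) := List.drop_eq_getElem_cons hk
    have ht : l.take (k + 1) = l.take k ++ [l[k]] := by simp
    refine ⟨l.take k, l[k], l.drop (k + 1), ?_, ?_, h3, ?_, ?_⟩
    · rw [← hd, List.take_append_drop]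
    · simp; omega
    · rw [← ht]; exact h4
    · rw [← hd]; simpa using h5
  · rintro ⟨L, c, R, rfl, rfl, h3, h4, h5⟩
    refine ⟨by omega, by simp, h3, ?_, ?_⟩
    · rw [show L ++ c :: R = (L ++ [c]) ++ R by simp, List.take_left' (by simp)]
      exact h4
    · rw [Nat.add_sub_cancel, List.drop_left]
      exact h5

def up (c : ℕ) (A : Finset ℕ) : List ℕ := A.sort.map (fun x => x + c + 1)

lemma up_inj (c : ℕ) : Function.Injective (up c) := by
  intro A B h
  have := List.map_injective_iff.2 (fun x y (h : x + c + 1 = y + c + 1) => by omega) h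
  rw [← Finset.sort_toFinset A (· ≤ ·), ← Finset.sort_toFinset B (· ≤ ·), this]

lemma up_length (c : ℕ) (A : Finset ℕ) : (up c A).length = A.card := by simp [up]

lemma up_sum (c : ℕ) (A : Finset ℕ) : (up c A).sum = A.sum id + (c + 1) * A.card := by
  have h : (up c A).sum = (A.1.map (fun x => x + c + 1)).sum := by
    rw [← Finset.sort_eq A (· ≤ ·), Multiset.map_coe, Multiset.sum_coe]; rfl
  rw [h]
  change ∑ x ∈ A, (x + c + 1) = _
  simp [Finset.sum_add_distrib]; ring

lemma up_pairwise (c : ℕ) (A : Finset ℕ) : (c :: up c A).Pairwise (· < ·) := by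
  rw [List.pairwise_cons]
  constructor
  · intro x hx
    simp only [up, List.mem_map] at hx
    obtain ⟨y, -, rfl⟩ := hx
    omega
  · rw [up, List.pairwise_map]
    have h1 := Finset.pairwise_sort A (· ≤ ·)
    have h2 := Finset.sort_nodup A (· ≤ ·)
    refine (h1.and h2).imp ?_
    rintro a b ⟨h, h'⟩
    have : a ≠ b := h'
    omega

lemma up_surj (c : ℕ) (R : List ℕ) (h : (c :: R).Pairwise (· < ·)) : ∃ A, up c A = R := by
  rw [List.pairwise_cons] at h
  obtain ⟨hc, hR⟩ := h
  set R' := R.map (fun x => x - (c + 1)) with hR'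
  have hp : R'.Pairwise (· < ·) := by
    rw [hR', List.pairwise_map]
    refine hR.imp_of_mem ?_
    intro a b ha hb hab
    have := hc a ha
    omega
  refine ⟨R'.toFinset, ?_⟩
  rw [up, (List.toFinset_sort (· ≤ ·) (hp.imp (fun h => h.ne))).2 (hp.imp (fun h => h.le)),
    hR', List.map_map]
  conv_rhs => rw [← List.map_id R]
  apply List.map_congr_left
  intro x hx
  have := hc x hx
  simp; omega

def Psi (t : ℕ × (Finset ℕ × Finset ℕ)) : List ℕ × ℕ :=
  ((up t.1 t.2.1).reverse ++ t.1 :: up t.1 t.2.2, t.2.1.card + 1)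

lemma Psi_inj : Function.Injective Psi := by
  rintro ⟨c, L, R⟩ ⟨c', L', R'⟩ h
  simp only [Psi, Prod.mk.injEq] at h
  obtain ⟨h1, h2⟩ := h
  have := List.append_inj h1 (by simp [up_length]; omega)
  obtain ⟨h3, h4⟩ := this
  rw [List.cons.injEq] at h4
  obtain ⟨rfl, h4⟩ := h4
  rw [up_inj _ h4, up_inj _ (List.reverse_injective h3)]

lemma scc_iff' (n : ℕ) (p : List ℕ × ℕ) : IsSCC n p.1 p.2 ↔
    ∃ t : ℕ × (Finset ℕ × Finset ℕ), Psi t = p ∧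
      t.1 + (t.2.1.sum id + t.2.2.sum id + (t.1 + 1) * (t.2.1.card + t.2.2.card)) = n := by
  obtain ⟨l, k⟩ := p
  simp only [scc_iff]
  have hrev : ∀ (L : List ℕ) (c : ℕ), (L ++ [c]).Pairwise (· > ·) ↔
      (c :: L.reverse).Pairwise (· < ·) := by
    intro L c
    rw [← List.pairwise_reverse]
    simp
  have hsum : ∀ c L R, ((up c L).reverse ++ c :: up c R).sum =
      c + (L.sum id + R.sum id + (c + 1) * (L.card + R.card)) := by
    intro c L R
    simp only [List.sum_append, List.sum_reverse, List.sum_cons, up_sum]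
    ring
  constructor
  · rintro ⟨L, c, R, rfl, rfl, h3, h4, h5⟩
    rw [hrev] at h4
    obtain ⟨A, hA⟩ := up_surj c _ h4
    obtain ⟨B, rfl⟩ := up_surj c _ h5
    have hL : L = (up c A).reverse := by rw [hA, List.reverse_reverse]
    subst hL
    refine ⟨(c, A, B), by simp [Psi, up_length], ?_⟩
    rw [← h3, hsum]
  · rintro ⟨⟨c, A, B⟩, h, h'⟩
    simp only [Psi, Prod.mk.injEq] at h
    obtain ⟨rfl, rfl⟩ := h
    refine ⟨_, c, _, rfl, by simp [up_length], ?_, ?_, up_pairwise c B⟩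
    · rw [hsum]; exact h'
    · rw [hrev, List.reverse_reverse]; exact up_pairwise c A

lemma rank_Psi (t : ℕ × (Finset ℕ × Finset ℕ)) :
    sccRank (Psi t).1 (Psi t).2 = (t.2.2.card : ℤ) - t.2.1.card := by
  simp [Psi, sccRank, up_length]; ring

lemma Vd_eq (ℓ : ℤ) (n : ℕ) : Vd ℓ n = vcnt ℓ.natAbs n := by
  rw [Vd, vcnt]
  rcases le_total 0 ℓ with h | h
  · have : {p : List ℕ × ℕ | IsSCC n p.1 p.2 ∧ sccRank p.1 p.2 = ℓ} =
        (fun t : ℕ × (Finset ℕ × Finset ℕ) => Psi (t.1, t.2.2, t.2.1)) ''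
          (TS ℓ.natAbs ∩ {a | tw ℓ.natAbs a = n}) := by
      ext p
      simp only [Set.mem_ofPred_eq, Set.mem_image, Set.mem_inter_iff, scc_iff', TS, FS, tw, fw]
      constructor
      · rintro ⟨⟨⟨c, A, B⟩, rfl, h1⟩, h2⟩
        rw [rank_Psi] at h2
        simp only at h1 h2
        have h3 : B.card = A.card + ℓ.natAbs := by omega
        refine ⟨(c, B, A), ⟨h3, ?_⟩, rfl⟩
        simp only
        rw [← h1, h3]; ring
      · rintro ⟨⟨c, B, A⟩, ⟨h3, h1⟩, rfl⟩
        simp only at h3 h1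
        refine ⟨⟨_, rfl, ?_⟩, ?_⟩
        · simp only
          rw [← h1, h3]; ring
        · rw [rank_Psi]; simp only; omega
    rw [this, Set.ncard_image_of_injective]
    rintro ⟨a, b, c⟩ ⟨a', b', c'⟩ h
    have := Psi_inj h
    simp only [Prod.mk.injEq] at this ⊢
    tauto
  · have : {p : List ℕ × ℕ | IsSCC n p.1 p.2 ∧ sccRank p.1 p.2 = ℓ} =
        Psi '' (TS ℓ.natAbs ∩ {a | tw ℓ.natAbs a = n}) := by
      ext p
      simp only [Set.mem_ofPred_eq, Set.mem_image, Set.mem_inter_iff, scc_iff', TS, FS, tw, fw]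
      constructor
      · rintro ⟨⟨⟨c, A, B⟩, rfl, h1⟩, h2⟩
        rw [rank_Psi] at h2
        simp only at h1 h2
        have h3 : A.card = B.card + ℓ.natAbs := by omega
        refine ⟨(c, A, B), ⟨h3, ?_⟩, rfl⟩
        simp only
        rw [← h1, h3]; ring
      · rintro ⟨⟨c, A, B⟩, ⟨h3, h1⟩, rfl⟩
        simp only at h3 h1
        refine ⟨⟨_, rfl, ?_⟩, ?_⟩
        · simp only
          rw [← h1, h3]; ring
        · rw [rank_Psi]; simp only; omega
    rw [this, Set.ncard_image_of_injective _ Psi_inj]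

theorem stmt_0 (N : ℕ) (ℓ : ℤ) :
    (Vd ℓ (N + ℓ.natAbs * (ℓ.natAbs + 1) / 2) : ℤ) =
      ∑' n : ℕ,
        chi n * partitionCount ((N : ℤ) - 2 * n * (n + 1) / 3 - n * ℓ.natAbs) := by
  rw [Vd_eq, tri_eq, vcnt_eq]
  rfl
end

section
/- For all integers N ≥ 0 and ℓ with 2|ℓ| + 4 > N, the number of strongly concave compositions of N + |ℓ|(|ℓ|+1)/2 with rank ℓ equals the number of integer partitions of N; that is, V_d(ℓ, N + |ℓ|(|ℓ|+1)/2) = p(N). -/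
open scoped BigOperators

def SccD (m : ℤ) (n : ℕ) : Set (ℕ × Finset ℕ × Finset ℕ) :=
  {t | (∀ x ∈ t.2.1, t.1 < x) ∧ (∀ x ∈ t.2.2, t.1 < x) ∧
    t.1 + ∑ x ∈ t.2.1, x + ∑ x ∈ t.2.2, x = n ∧ (t.2.1.card : ℤ) - t.2.2.card = m}

lemma sum_sort_aux (s : Finset ℕ) (r : ℕ → ℕ → Prop) [DecidableRel r] [IsTrans ℕ r]
    [Std.Antisymm r] [Std.Total r] : (s.sort r).sum = ∑ x ∈ s, x := by
  rw [← Multiset.sum_coe, Finset.sort_eq]; exact (congrArg Multiset.sum (Multiset.map_id' _)).symm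

lemma isSCC_iff (n : ℕ) (l : List ℕ) (k : ℕ) : IsSCC n l k ↔
    ∃ A c B, l = A ++ c :: B ∧ k = A.length + 1 ∧ l.sum = n ∧ A.Pairwise (· > ·) ∧
      (∀ x ∈ A, c < x) ∧ (∀ x ∈ B, c < x) ∧ B.Pairwise (· < ·) := by
  constructor
  · rintro ⟨h1, h2, h3, h4, h5⟩
    have hk : k - 1 < l.length := by omega
    have hl : l = l.take (k-1) ++ l[k-1] :: l.drop k := by
      conv_lhs => rw [← List.take_append_drop (k-1) l, List.drop_eq_getElem_cons hk]
      rw [Nat.sub_add_cancel h1]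
    have h4' : (l.take (k-1) ++ [l[k-1]]).Pairwise (· > ·) := by
      rw [← List.take_succ_eq_append_getElem hk, Nat.sub_add_cancel h1, List.pairwise_iff_getElem]
      intro i j hi hj hij
      simp only [List.length_take] at hi hj
      simpa using h4 ⟨i, by omega⟩ ⟨j, by omega⟩ hij (show j < k by omega)
    have h5' : (l[k-1] :: l.drop k).Pairwise (· < ·) := by
      have : l[k-1] :: l.drop k = l.drop (k-1) := by
        rw [List.drop_eq_getElem_cons hk, Nat.sub_add_cancel h1]
      rw [this, List.pairwise_iff_getElem]
      intro i j hi hj hij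
      simp only [List.length_drop] at hi hj
      simpa using h5 ⟨k-1+i, by omega⟩ ⟨k-1+j, by omega⟩ (show k - 1 ≤ k - 1 + i by omega) (show k - 1 + i < k - 1 + j by omega)
    rw [List.pairwise_append] at h4'
    rw [List.pairwise_cons] at h5'
    refine ⟨_, _, _, hl, ?_, h3, h4'.1, ?_, h5'.1, h5'.2⟩
    · simp; omega
    · intro x hx; exact h4'.2.2 x hx _ (by simp)
  · rintro ⟨A, c, B, rfl, rfl, h3, hA, hAc, hBc, hB⟩
    have h1 : (A ++ [c]).Pairwise (· > ·) := by
      rw [List.pairwise_append]; simp [hA]; exact hAc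
    have h2 : (c :: B).Pairwise (· < ·) := by
      rw [List.pairwise_cons]; exact ⟨hBc, hB⟩
    refine ⟨by omega, by simp, h3, ?_, ?_⟩
    · rintro ⟨i, hi⟩ ⟨j, hj⟩ hij hjk
      simp only at hij hjk
      rw [List.pairwise_iff_getElem] at h1
      have := h1 i j (by simp; omega) (by simp; omega) hij
      have e : A ++ c :: B = (A ++ [c]) ++ B := by simp
      simp only [List.get_eq_getElem, e]
      have hj' : j < (A ++ [c]).length := by simp; omega
      have hi' : i < (A ++ [c]).length := by omega
      rw [List.getElem_append_left hj', List.getElem_append_left hi']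
      exact this
    · rintro ⟨i, hi⟩ ⟨j, hj⟩ hki hij
      simp only at hij hki
      rw [List.pairwise_iff_getElem] at h2
      simp only [List.length_append, List.length_cons] at hi hj
      have := h2 (i - A.length) (j - A.length) (by simp; omega) (by simp; omega) (by omega)
      simp only [List.get_eq_getElem]
      rw [List.getElem_append_right (by omega), List.getElem_append_right (by omega)]
      exact this

lemma sort_lt_aux {B : List ℕ} (hB : B.Pairwise (· < ·)) : B.toFinset.sort (· ≤ ·) = B := by
  rw [List.toFinset_sort]
  · exact hB.imp le_of_lt
  · exact hB.imp ne_of_lt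

lemma sort_gt_aux {B : List ℕ} (hB : B.Pairwise (· > ·)) : B.toFinset.sort (· ≥ ·) = B := by
  rw [List.toFinset_sort]
  · exact hB.imp le_of_lt
  · exact hB.imp ne_of_gt

lemma Vd_eq_s2 (m : ℤ) (n : ℕ) : Vd m n = (SccD m n).ncard := by
  symm
  apply Set.BijOn.ncard_eq
    (f := fun t => (t.2.2.sort (· ≥ ·) ++ t.1 :: t.2.1.sort (· ≤ ·), t.2.2.card + 1))
  refine ⟨?_, ?_, ?_⟩
  · rintro ⟨c, R, L⟩ ⟨h1, h2, h3, h4⟩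
    simp only at h1 h2 h3 h4
    refine ⟨(isSCC_iff _ _ _).2 ⟨_, _, _, rfl, by simp, ?_, ?_, by simpa using h2,
      by simpa using h1, ?_⟩, ?_⟩
    · simp only [List.sum_append, List.sum_cons, sum_sort_aux]; omega
    · exact (Finset.sortedGT_sort L).pairwise
    · exact (Finset.sortedLT_sort R).pairwise
    · simp [sccRank]; omega
  · rintro ⟨c, R, L⟩ _ ⟨c', R', L'⟩ _ he
    simp only [Prod.mk.injEq] at he
    obtain ⟨he, hc⟩ := he
    obtain ⟨e1, e2⟩ := List.append_inj he (by simp; omega)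
    simp only [List.cons.injEq] at e2
    have e3 := congrArg List.toFinset e1
    have e4 := congrArg List.toFinset e2.2
    simp only [Finset.sort_toFinset] at e3 e4
    simp [e2.1, e3, e4]
  · rintro ⟨l, k⟩ ⟨h, hr⟩
    obtain ⟨A, c, B, rfl, rfl, h3, hA, hAc, hBc, hB⟩ := (isSCC_iff _ _ _).1 h
    have sA := sort_gt_aux hA
    have sB := sort_lt_aux hB
    have cA : A.toFinset.card = A.length := by rw [← Finset.length_sort (· ≥ ·), sA]
    have cB : B.toFinset.card = B.length := by rw [← Finset.length_sort (· ≤ ·), sB]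
    refine ⟨(c, B.toFinset, A.toFinset), ⟨by simpa using hBc, by simpa using hAc, ?_, ?_⟩, ?_⟩
    · simp only
      rw [← sum_sort_aux _ (· ≤ ·), ← sum_sort_aux _ (· ≥ ·), sA, sB]
      simp at h3; omega
    · simp only [sccRank] at hr
      simp only [cA, cB]; simp at hr; omega
    · simp only [sA, sB, cA]

lemma SccD_neg (m : ℤ) (n : ℕ) : (SccD (-m) n).ncard = (SccD m n).ncard := by
  apply Set.BijOn.ncard_eq (f := fun t => (t.1, t.2.2, t.2.1))
  refine ⟨?_, ?_, ?_⟩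
  · rintro ⟨c, R, L⟩ ⟨h1, h2, h3, h4⟩
    simp only at h1 h2 h3 h4
    exact ⟨h2, h1, by simp only; omega, by simp only; omega⟩
  · rintro ⟨c, R, L⟩ _ ⟨c', R', L'⟩ _ he
    simp at he ⊢; tauto
  · rintro ⟨c, R, L⟩ ⟨h1, h2, h3, h4⟩
    simp only at h1 h2 h3 h4
    exact ⟨(c, L, R), ⟨h2, h1, by simp only; omega, by simp only; omega⟩, rfl⟩

def FrobF (l n : ℕ) : Set (Finset ℕ × Finset ℕ) :=
  {t | 0 ∉ t.1 ∧ t.1.card = t.2.card + l ∧ ∑ x ∈ t.1, x + ∑ x ∈ t.2, x = n}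

lemma sum_lower (s : Finset ℕ) : (∀ x ∈ s, 1 ≤ x) → s.card * (s.card + 1) ≤ 2 * ∑ x ∈ s, x := by
  induction s using Finset.induction_on_max with
  | empty => simp
  | insert a s ha ih =>
    intro h
    have hn : a ∉ s := fun h' => lt_irrefl _ (ha a h')
    have ih' := ih (fun x hx => h x (by simp [hx]))
    have hc : s.card ≤ a - 1 := by
      have : s ⊆ Finset.Ico 1 a := fun x hx => by
        simp; exact ⟨h x (by simp [hx]), ha x hx⟩
      simpa using Finset.card_le_card this
    have h1 := h a (by simp)
    rw [Finset.card_insert_of_notMem hn, Finset.sum_insert hn]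
    have : s.card + 1 ≤ a := by omega
    nlinarith

lemma SccD_frob (l n : ℕ) (hn : 2 * n < l * (l + 1) + 2 * (2 * l + 4)) :
    (SccD l n).ncard = (FrobF l n).ncard := by
  apply Set.BijOn.ncard_eq
    (f := fun t => if t.1 = 0 then (t.2.1, t.2.2) else (insert t.1 t.2.1, insert 0 t.2.2))
  have key : ∀ c (R L : Finset ℕ), (c, R, L) ∈ SccD l n →
    c ∉ R ∧ 0 ∉ R ∧ 0 ∉ L := by
    rintro c R L ⟨h1, h2, -, -⟩
    refine ⟨fun h => lt_irrefl _ (h1 c h), fun h => ?_, fun h => ?_⟩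
    · have := h1 0 h; simp at this
    · have := h2 0 h; simp at this
  refine ⟨?_, ?_, ?_⟩
  · rintro ⟨c, R, L⟩ h
    obtain ⟨k1, k2, k3⟩ := key _ _ _ h
    obtain ⟨h1, h2, h3, h4⟩ := h
    simp only at h1 h2 h3 h4
    by_cases hc : c = 0
    · subst hc
      simp only [if_true]
      exact ⟨k2, by simp only; omega, by simp only; omega⟩
    · simp only [hc, if_false]
      refine ⟨by simp [k2]; omega, ?_, ?_⟩
      · simp only [Finset.card_insert_of_notMem k1, Finset.card_insert_of_notMem k3]; omega
      · simp only [Finset.sum_insert k1, Finset.sum_insert k3]; omega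
  · rintro ⟨c, R, L⟩ h ⟨c', R', L'⟩ h' he
    obtain ⟨k1, k2, k3⟩ := key _ _ _ h
    obtain ⟨k1', k2', k3'⟩ := key _ _ _ h'
    obtain ⟨h1, -⟩ := h
    obtain ⟨h1', -⟩ := h'
    simp only at h1 h1' he
    by_cases hc : c = 0 <;> by_cases hc' : c' = 0 <;>
      simp only [hc, hc', if_true, if_false, Prod.mk.injEq] at he ⊢
    · simpa using he
    · exact absurd (he.2 ▸ Finset.mem_insert_self 0 L') k3
    · exact absurd (he.2.symm ▸ Finset.mem_insert_self 0 L) k3'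
    · have hL : L = L' := by
        rw [← Finset.erase_insert k3, he.2, Finset.erase_insert k3']
      have hcc : c = c' := by
        have a1 : c ∈ insert c' R' := he.1 ▸ Finset.mem_insert_self c R
        have a2 : c' ∈ insert c R := he.1.symm ▸ Finset.mem_insert_self c' R'
        rw [Finset.mem_insert] at a1 a2
        rcases a1 with a1 | a1
        · exact a1
        · rcases a2 with a2 | a2
          · exact a2.symm
          · have := h1 _ a2; have := h1' _ a1; omega
      subst hcc
      refine ⟨rfl, ?_, hL⟩
      rw [← Finset.erase_insert k1, he.1, Finset.erase_insert k1']
  · rintro ⟨R, L⟩ ⟨h1, h2, h3⟩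
    simp only at h1 h2 h3
    by_cases h0 : 0 ∈ L
    · have hLc := Finset.card_pos.2 ⟨0, h0⟩
      have hne : R.Nonempty := Finset.card_pos.1 (by omega)
      set c := R.min' hne with hc
      have hcR : c ∈ R := Finset.min'_mem _ _
      have hc0 : c ≠ 0 := fun h => h1 (h ▸ hcR)
      have e1 := Finset.card_erase_add_one hcR
      have e2 := Finset.card_erase_add_one h0
      have e3 := Finset.add_sum_erase R (fun x => x) hcR
      have e4 := Finset.add_sum_erase L (fun x => x) h0
      refine ⟨(c, R.erase c, L.erase 0), ⟨?_, ?_, by simp only; omega, by simp only; omega⟩, ?_⟩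
      · intro x hx
        simp only [Finset.mem_erase] at hx
        exact lt_of_le_of_ne (Finset.min'_le _ _ hx.2) (Ne.symm hx.1)
      · intro x hx
        by_contra hlt
        simp only [not_lt, Finset.mem_erase] at hlt hx
        have hLc2 : 2 ≤ L.card := by
          have := Finset.card_pos.2 ⟨x, Finset.mem_erase.2 hx⟩
          omega
        have hs := sum_lower R (fun y hy => Nat.one_le_iff_ne_zero.2 (fun h => h1 (h ▸ hy)))
        have hx' : x ≤ ∑ y ∈ L, y := Finset.single_le_sum (f := fun y => y) (by simp) hx.2
        have hR : l + 2 ≤ R.card := by omega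
        have hx1 : 1 ≤ x := Nat.one_le_iff_ne_zero.2 hx.1
        nlinarith
      · simp only [hc0, if_false, Finset.insert_erase hcR, Finset.insert_erase h0]
    · refine ⟨(0, R, L), ⟨?_, ?_, by simp only; omega, by simp only; omega⟩, by simp⟩
      · intro x hx; exact Nat.pos_of_ne_zero (fun h => h1 (h ▸ hx))
      · intro x hx; exact Nat.pos_of_ne_zero (fun h => h0 (h ▸ hx))

def TSet (m n : ℕ) : Set (Finset ℕ) := {T | T.card = m ∧ ∑ x ∈ T, x = n}

def MonoX (m N : ℕ) : Set (Fin m → ℕ) := {f | Monotone f ∧ ∑ i, f i = N}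

lemma strictMono_gap {m : ℕ} {g : Fin m → ℕ} (hg : StrictMono g) :
    ∀ (d : ℕ) (i j : Fin m), (i : ℕ) + d = j → g i + d ≤ g j := by
  intro d
  induction d with
  | zero => intro i j h; have : i = j := Fin.ext (by omega); simp [this]
  | succ d ih =>
    intro i j h
    have hj := j.2
    have h1 := ih i ⟨i + d, by omega⟩ rfl
    have h2 : g ⟨i + d, by omega⟩ < g j := hg (by rw [Fin.lt_def]; simp; omega)
    omega

lemma MonoX_TSet (m N : ℕ) : (MonoX m N).ncard = (TSet m (N + ∑ i ∈ Finset.range m, i)).ncard := by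
  apply Set.BijOn.ncard_eq (f := fun f : Fin m → ℕ => Finset.univ.image (fun i : Fin m => f i + i))
  have sm : ∀ f : Fin m → ℕ, Monotone f → StrictMono (fun i : Fin m => f i + i) := by
    intro f hf i j hij
    have := hf hij.le
    have : (i : ℕ) < j := hij
    simp only; omega
  refine ⟨?_, ?_, ?_⟩
  · rintro f ⟨h1, h2⟩
    refine ⟨?_, ?_⟩
    · rw [Finset.card_image_of_injective _ (sm f h1).injective]; simp
    · rw [Finset.sum_image (fun a _ b _ h => (sm f h1).injective h), Finset.sum_add_distrib, h2,
        Finset.sum_range]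
  · rintro f ⟨h1, -⟩ f' ⟨h1', -⟩ he
    have := congrArg (fun s : Finset ℕ => (s : Set ℕ)) he
    simp only [Finset.coe_image, Finset.coe_univ, Set.image_univ] at this
    have h3 := ((sm f h1).range_inj (sm f' h1')).1 this
    funext i
    have := congrFun h3 i
    simpa using this
  · rintro T ⟨h1, h2⟩
    set g := T.orderEmbOfFin h1 with hg
    have gap := strictMono_gap g.strictMono
    have hle : ∀ i : Fin m, (i : ℕ) ≤ g i := by
      intro i
      have := gap i ⟨0, by have := i.2; omega⟩ i (by simp)
      omega
    have him : Finset.univ.image (fun i : Fin m => g i - i + i) = T := by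
      rw [← T.image_orderEmbOfFin_univ h1]
      apply Finset.image_congr
      intro i _
      exact Nat.sub_add_cancel (hle i)
    refine ⟨fun i => g i - i, ⟨?_, ?_⟩, him⟩
    · intro i j hij
      have hij' : (i : ℕ) ≤ j := hij
      have := gap (j - i) i j (by omega)
      have := hle i
      simp only; omega
    · have e : ∑ i : Fin m, (g i - i + i) = ∑ x ∈ T, x := by
        conv_rhs => rw [← T.image_orderEmbOfFin_univ h1]
        rw [Finset.sum_image (fun a _ b _ h => g.injective h)]
        exact Finset.sum_congr rfl (fun i _ => Nat.sub_add_cancel (hle i))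
      rw [Finset.sum_add_distrib, h2, Finset.sum_range] at e
      exact Nat.add_right_cancel e

lemma filter_zero_aux (s : Multiset ℕ) :
    s = s.filter (· ≠ 0) + Multiset.replicate (s.card - (s.filter (· ≠ 0)).card) 0 := by
  have h := Multiset.filter_add_not (fun x : ℕ => x ≠ 0) s
  have h2 : s.filter (fun x => ¬ x ≠ 0) = Multiset.replicate (s.filter (fun x => ¬ x ≠ 0)).card 0 := by
    rw [Multiset.eq_replicate_card]
    intro b hb
    simpa using (Multiset.mem_filter.1 hb).2
  have h3 := congrArg Multiset.card h
  rw [Multiset.card_add] at h3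
  rw [show s.card - (s.filter (· ≠ 0)).card = (s.filter (fun x => ¬ x ≠ 0)).card by omega, ← h2, h]

lemma MonoX_partition (m N : ℕ) (hm : N ≤ m) :
    (MonoX m N).ncard = Fintype.card (Nat.Partition N) := by
  rw [← Nat.card_eq_fintype_card, ← Set.ncard_univ]
  have hsum : ∀ f : Fin m → ℕ, (Multiset.ofList (List.ofFn f)).sum = ∑ i, f i := by
    intro f; simp [List.sum_ofFn]
  apply Set.ncard_congr
    (fun f hf => Nat.Partition.ofSums N (Multiset.ofList (List.ofFn f)) ((hsum f).trans hf.2))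
  · intros; trivial
  · rintro f f' ⟨h1, h2⟩ ⟨h1', h2'⟩ he
    have he' := congrArg Nat.Partition.parts he
    simp only [Nat.Partition.ofSums] at he'
    have : Multiset.ofList (List.ofFn f) = Multiset.ofList (List.ofFn f') := by
      rw [filter_zero_aux (Multiset.ofList (List.ofFn f)),
        filter_zero_aux (Multiset.ofList (List.ofFn f')), he']
      simp
    have := (Multiset.coe_eq_coe.1 this).eq_of_sortedLE
      (List.sortedLE_ofFn_iff.2 h1) (List.sortedLE_ofFn_iff.2 h1')
    exact List.ofFn_injective this
  · intro p _
    have hcard : p.parts.card ≤ N := by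
      conv_rhs => rw [← p.parts_sum]
      have := Multiset.card_nsmul_le_sum (s := p.parts) (a := 1) (fun x hx => p.parts_pos hx)
      simpa using this
    set s := p.parts + Multiset.replicate (m - p.parts.card) 0 with hs
    have hsc : s.sort.length = m := by simp [hs]; omega
    have hof : List.ofFn (fun i : Fin m => s.sort.get (i.cast hsc.symm)) = s.sort := by
      apply List.ext_get
      · simp [hsc]
      · intros; simp
    have hco : (Multiset.ofList (List.ofFn (fun i : Fin m => s.sort.get (i.cast hsc.symm)))) = s := by
      rw [hof]; simp
    refine ⟨fun i => s.sort.get (i.cast hsc.symm), ⟨?_, ?_⟩, ?_⟩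
    · rw [← List.sortedLE_ofFn_iff, hof]
      exact (Multiset.pairwise_sort s _).sortedLE
    · rw [← hsum, hco]; simp [hs, p.parts_sum]
    · apply Nat.Partition.ext
      simp only [Nat.Partition.ofSums]
      rw [hco, hs, Multiset.filter_add]
      have h1 : p.parts.filter (· ≠ 0) = p.parts :=
        Multiset.filter_eq_self.2 (fun x hx => (p.parts_pos hx).ne')
      have h2 : (Multiset.replicate (m - p.parts.card) 0).filter (· ≠ 0) = 0 :=
        Multiset.filter_eq_nil.2 (fun x hx => by simp [Multiset.eq_of_mem_replicate hx])
      rw [h1, h2, add_zero]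

/-- the Maya diagram decomposition -/
lemma TSet_frob (l n M n' : ℕ) (hM : n < M)
    (hn' : n' = n + l * (M - 1) + ∑ i ∈ Finset.range M, i) :
    (TSet (M + l) n').ncard = (FrobF l n).ncard := by
  have part : ∀ T : Finset ℕ, 
      ((T.filter (M ≤ ·)).image (· - (M-1))).card + (M - ((Finset.range M \ T).image (M - 1 - ·)).card)
        = T.card ∧ ((Finset.range M \ T).image (M - 1 - ·)).card ≤ M ∧
      ∑ x ∈ (T.filter (M ≤ ·)).image (· - (M-1)), x + 
        ((T.filter (M ≤ ·)).image (· - (M-1))).card * (M-1) + ∑ i ∈ Finset.range M, i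
        + ∑ x ∈ (Finset.range M \ T).image (M - 1 - ·), x = ∑ x ∈ T, x + 
          ((Finset.range M \ T).image (M - 1 - ·)).card * (M-1) := by
    intro T
    have i1 : Set.InjOn (· - (M-1)) (T.filter (M ≤ ·) : Set ℕ) := by
      intro a ha b hb h
      simp at ha hb h; omega
    have i2 : Set.InjOn (M - 1 - ·) (Finset.range M \ T : Set ℕ) := by
      intro a ha b hb h
      simp at ha hb h; omega
    have i2' : Set.InjOn (M - 1 - ·) ((Finset.range M \ T : Finset ℕ) : Set ℕ) := by
      simpa using i2
    have i1' : Set.InjOn (· - (M-1)) ((T.filter (M ≤ ·) : Finset ℕ) : Set ℕ) := i1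
    rw [Finset.card_image_of_injOn i1', Finset.card_image_of_injOn i2', Finset.sum_image i1',
      Finset.sum_image i2']
    have hT1 := Finset.card_filter_add_card_filter_not (s := T) (M ≤ ·)
    have hT2 := Finset.sum_filter_add_sum_filter_not T (M ≤ ·) (fun x => x)
    have hU1 : (Finset.range M \ T).card + (T.filter (¬ M ≤ ·)).card = M := by
      have : T.filter (¬ M ≤ ·) = Finset.range M ∩ T := by ext x; simp; tauto
      rw [this, Finset.card_sdiff_add_card_inter]; simp
    have hU2 : ∑ x ∈ Finset.range M \ T, x + ∑ x ∈ T.filter (¬ M ≤ ·), x = ∑ i ∈ Finset.range M, i := by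
      have : T.filter (¬ M ≤ ·) = Finset.range M ∩ T := by ext x; simp; tauto
      rw [this, ← Finset.sum_inter_add_sum_sdiff (Finset.range M) T]; omega
    have hS1 : ∑ x ∈ T.filter (M ≤ ·), (x - (M-1)) + (T.filter (M ≤ ·)).card * (M-1)
        = ∑ x ∈ T.filter (M ≤ ·), x := by
      rw [← smul_eq_mul, ← Finset.sum_const, ← Finset.sum_add_distrib]
      apply Finset.sum_congr rfl
      intro x hx; simp at hx; omega
    have hS2 : ∑ x ∈ Finset.range M \ T, (M - 1 - x) + ∑ x ∈ Finset.range M \ T, x 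
        = (Finset.range M \ T).card * (M-1) := by
      rw [← smul_eq_mul, ← Finset.sum_const, ← Finset.sum_add_distrib]
      apply Finset.sum_congr rfl
      intro x hx; simp at hx; omega
    refine ⟨by omega, by omega, by omega⟩
  have iff : ∀ T : Finset ℕ, T ∈ TSet (M + l) n' ↔ ((T.filter (M ≤ ·)).image (· - (M-1)),
      (Finset.range M \ T).image (M - 1 - ·)) ∈ FrobF l n := by
    intro T
    obtain ⟨p1, p2, p3⟩ := part T
    simp only [TSet, FrobF, Set.mem_ofPred_eq]
    have h0 : 0 ∉ (T.filter (M ≤ ·)).image (· - (M-1)) := by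
      simp; intros; omega
    generalize (T.filter (M ≤ ·)).image (· - (M-1)) = R at *
    generalize (Finset.range M \ T).image (M - 1 - ·) = L at *
    have : (R.card = L.card + l) → R.card * (M-1) = L.card * (M-1) + l * (M-1) := by
      intro h; rw [h, add_mul]
    constructor
    · rintro ⟨a, b⟩
      have hc : R.card = L.card + l := by omega
      have := this hc
      exact ⟨h0, hc, by omega⟩
    · rintro ⟨-, hc, b⟩
      have := this hc
      exact ⟨by omega, by omega⟩
  apply Set.BijOn.ncard_eq (f := fun T => ((T.filter (M ≤ ·)).image (· - (M-1)),
      (Finset.range M \ T).image (M - 1 - ·)))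
  refine ⟨fun T hT => (iff T).1 hT, ?_, ?_⟩
  · rintro T - T' - he
    simp only [Prod.mk.injEq] at he
    obtain ⟨e1, e2⟩ := he
    ext x
    by_cases hx : M ≤ x
    · have := Finset.ext_iff.1 e1 (x - (M-1))
      simp only [Finset.mem_image, Finset.mem_filter] at this
      constructor
      · intro h
        obtain ⟨y, ⟨hy, hy'⟩, e⟩ := this.1 ⟨x, ⟨h, hx⟩, rfl⟩
        rwa [show x = y by omega]
      · intro h
        obtain ⟨y, ⟨hy, hy'⟩, e⟩ := this.2 ⟨x, ⟨h, hx⟩, rfl⟩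
        rwa [show x = y by omega]
    · have := Finset.ext_iff.1 e2 (M - 1 - x)
      simp only [Finset.mem_image, Finset.mem_sdiff, Finset.mem_range] at this
      rw [← not_iff_not]
      constructor
      · intro h
        obtain ⟨y, ⟨hy, hy'⟩, e⟩ := this.1 ⟨x, ⟨by omega, h⟩, rfl⟩
        rwa [show x = y by omega]
      · intro h
        obtain ⟨y, ⟨hy, hy'⟩, e⟩ := this.2 ⟨x, ⟨by omega, h⟩, rfl⟩
        rwa [show x = y by omega]
  · rintro ⟨R, L⟩ h
    have hL : ∀ x ∈ L, x < M := by
      intro x hx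
      have : x ≤ ∑ y ∈ L, y := Finset.single_le_sum (f := fun y => y) (by simp) hx
      have := h.2.2
      simp only at this; omega
    have hR : ∀ x ∈ R, 1 ≤ x := fun x hx => Nat.one_le_iff_ne_zero.2 (fun e => h.1 (e ▸ hx))
    set T := R.image (· + (M-1)) ∪ (Finset.range M).filter (fun t => M - 1 - t ∉ L) with hT
    have memT : ∀ t, t ∈ T ↔ (∃ x ∈ R, x + (M-1) = t) ∨ (t < M ∧ M - 1 - t ∉ L) := by
      intro t; simp [hT]
    have eR : (T.filter (M ≤ ·)).image (· - (M-1)) = R := by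
      ext x
      simp only [Finset.mem_image, Finset.mem_filter, memT]
      constructor
      · rintro ⟨t, ⟨⟨y, hy, rfl⟩ | h, h'⟩, rfl⟩
        · simpa using hy
        · omega
      · intro hx
        have := hR x hx
        exact ⟨x + (M-1), ⟨Or.inl ⟨x, hx, rfl⟩, by omega⟩, by omega⟩
    have eL : (Finset.range M \ T).image (M - 1 - ·) = L := by
      ext x
      simp only [Finset.mem_image, Finset.mem_sdiff, Finset.mem_range, memT]
      constructor
      · rintro ⟨t, ⟨h1, h2⟩, rfl⟩
        by_contra hn
        exact h2 (Or.inr ⟨h1, hn⟩)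
      · intro hx
        have hxM := hL x hx
        refine ⟨M - 1 - x, ⟨by omega, ?_⟩, by omega⟩
        rintro (⟨y, hy, e⟩ | ⟨-, h2⟩)
        · have := hR y hy; omega
        · rw [show M - 1 - (M - 1 - x) = x by omega] at h2; exact h2 hx
    refine ⟨T, (iff T).2 ?_, ?_⟩
    · rw [eR, eL]; exact h
    · simp only [eR, eL]

theorem stmt_2 (N : ℕ) (ℓ : ℤ) (h : 2 * |ℓ| + 4 > (N : ℤ)) :
    Vd ℓ (N + ℓ.natAbs * (ℓ.natAbs + 1) / 2) = partitionCount (N : ℤ) := by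
  rw [Vd_eq_s2]
  have hp : partitionCount (N : ℤ) = Fintype.card (Nat.Partition N) := by simp [partitionCount]
  rw [hp]
  have habs : |ℓ| = (ℓ.natAbs : ℤ) := Int.abs_eq_natAbs ℓ
  have hneg : ∀ n, (SccD ℓ n).ncard = (SccD (ℓ.natAbs : ℤ) n).ncard := by
    intro n
    rcases Int.natAbs_eq ℓ with e | e
    · rw [← e]
    · conv_lhs => rw [e]
      exact SccD_neg _ _
  rw [hneg]
  rw [habs] at h
  generalize ℓ.natAbs = l at *
  have htri : 2 * (l * (l + 1) / 2) = l * (l + 1) :=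
    Nat.mul_div_cancel' (Nat.even_mul_succ_self l).two_dvd
  generalize l * (l + 1) / 2 = t at *
  rw [SccD_frob l _ (by omega), ← TSet_frob l (N + t) (N + t + 1) _ (by omega) rfl,
    ← MonoX_partition (N + t + 1 + l) N (by omega), MonoX_TSet]
  congr 2
  have h1 := Finset.sum_range_id_mul_two (N + t + 1)
  have h2 := Finset.sum_range_id_mul_two (N + t + 1 + l)
  rw [show N + t + 1 - 1 = N + t by omega] at *
  rw [show N + t + 1 + l - 1 = N + t + l by omega] at h2
  nlinarith
end
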